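/- Let α, β > −1, n ≥ 1, let u : ℝ → ℝ be twice differentiable, and let x_0,…,x_n be distinct points such that u(x_0) = −1, u(x_1),…,u(x_n) are the n distinct roots of the Jacobi polynomial G = P_n^{α,β+1}, u(x_0),…,u(x_n) are pairwise distinct, and u'(x_i) ≠ 0 for all i. Let L_j be the generalized Lagrange functions on these nodes and D the matrix with entries d_{kj} = L_j'(x_k). Then for all interior indices j ≠ k with 1 ≤ j, k ≤ n, d_{kj} = ( u'(x_k) (u(x_k) − u(x_0)) / ( (u(x_j) − u(x_0)) (u(x_k) − u(x_j)) ) ) · ( P_{n−1}^{α+1,β+2}(u(x_k)) / P_{n−1}^{α+1,β+2}(u(x_j)) ). -/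

import Mathlib

/-- Jacobi polynomials `P_n^{α,β}` defined by the three-term recurrence. -/
noncomputable def jacobiP (α β : ℝ) : ℕ → ℝ → ℝ
  | 0, _ => 1
  | 1, x => (α + β + 2) * x / 2 + (α - β) / 2
  | K + 2, x =>
      ((2 * ((K : ℝ) + 1) + α + β + 1) * (2 * ((K : ℝ) + 1) + α + β + 2) /
            (2 * (((K : ℝ) + 1) + 1) * (((K : ℝ) + 1) + α + β + 1)) * x -
          (β ^ 2 - α ^ 2) * (2 * ((K : ℝ) + 1) + α + β + 1) /
            (2 * (((K : ℝ) + 1) + 1) * (((K : ℝ) + 1) + α + β + 1) *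
              (2 * ((K : ℝ) + 1) + α + β))) *
        jacobiP α β (K + 1) x -
      (((K : ℝ) + 1) + α) * (((K : ℝ) + 1) + β) * (2 * ((K : ℝ) + 1) + α + β + 2) /
            ((((K : ℝ) + 1) + 1) * (((K : ℝ) + 1) + α + β + 1) * (2 * ((K : ℝ) + 1) + α + β)) *
        jacobiP α β K x

open Finset

/-- `glW u x t = ∏ i, (u t − u (x i))`. -/
noncomputable def glW (u : ℝ → ℝ) {n : ℕ} (x : Fin (n + 1) → ℝ) : ℝ → ℝ :=
  fun t => ∏ i, (u t - u (x i))

/-- Generalized Lagrange function `L_j(t) = κ_j ∏_{i ≠ j} (u t − u (x i))`,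
with `κ_j = u'(x_j) / w'(x_j)`. -/
noncomputable def glL (u : ℝ → ℝ) {n : ℕ} (x : Fin (n + 1) → ℝ) (j : Fin (n + 1)) : ℝ → ℝ :=
  fun t => (deriv u (x j) / deriv (glW u x) (x j)) *
    ∏ i ∈ Finset.univ.erase j, (u t - u (x i))

open Polynomial Lagrange

/-!
Let `W` be the nodal polynomial of the values `u_i = u(x_i)`. By the chain rule, the generalized
Lagrange functions satisfy `L_j'(x_k) = u'(x_k) / (u_k - u_j) * W'(u_k) / W'(u_j)` for `j ≠ k`.
If a polynomial `p ≠ 0` of degree at most `n` vanishes at all the `u_i` but `u_r`, then `W` is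
proportional to `(X - u_r) * p`, so `W'(u_i)` is proportional to `(u_i - u_r) * p'(u_i)` for
`i ≠ r`, and the ratio `W'(u_k) / W'(u_j)` is expressed through `p'`.

For `p = P_n^{α,β}`, the explicit expansion at `1` satisfies the three-term recurrence, by comparing
coefficients; differentiating it term by term gives a multiple of `P_{n-1}^{α+1,β+1}`.
-/

/-- The parameters for which no denominator in the three-term recurrence of the Jacobi polynomials
vanishes, i.e. `a + b` is not one of `-2, -3, …`. -/
def JacobiRegular (a b : ℝ) : Prop :=
  ∀ m : ℕ, m + a + b + 2 ≠ 0

lemma JacobiRegular.of_neg_two_lt {a b : ℝ} (h : -2 < a + b) : JacobiRegular a b := fun m =>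
  ne_of_gt (by linarith [m.cast_nonneg (α := ℝ)])

lemma JacobiRegular.succ_succ {a b : ℝ} (h : JacobiRegular a b) :
    JacobiRegular (a + 1) (b + 1) := fun m => by
  convert h (m + 2) using 1
  push_cast
  ring

/-- The coefficient of `t ^ k` in `P_n^{a,b}(1 + 2t)`: the explicit formula, DLMF 18.5.7. The
factor `n.choose k` makes it vanish for `n < k`, where `n - k` is truncated. -/
noncomputable def jacobiCoeff (a b : ℝ) (n k : ℕ) : ℝ :=
  n.choose k / n.factorial *
    ((ascPochhammer ℝ (n - k)).eval (a + k + 1) * (ascPochhammer ℝ k).eval (n + a + b + 1))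

/-- `P_n^{a,b}(1 + 2t)` as a polynomial in `t`: in this variable the three-term recurrence and the
derivative act on single coefficients. -/
noncomputable def jacobiTaylorPoly (a b : ℝ) (n : ℕ) : ℝ[X] :=
  ∑ k ∈ range (n + 1), monomial k (jacobiCoeff a b n k)

/-- The Jacobi polynomial `P_n^{a,b}` as an element of `ℝ[X]`, defined by its explicit expansion
at `1`; it induces the function `jacobiP a b n` when `JacobiRegular a b`. -/
noncomputable def jacobiPoly (a b : ℝ) (n : ℕ) : ℝ[X] :=
  (jacobiTaylorPoly a b n).comp (C (1 / 2) * (X - 1))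

section Coefficients

lemma ascPochhammer_eval_succ_left {R : Type*} [CommSemiring R] (k : ℕ) (y : R) :
    (ascPochhammer R (k + 1)).eval y = y * (ascPochhammer R k).eval (y + 1) := by
  simp [ascPochhammer_succ_left]

variable (a b : ℝ)

lemma jacobiCoeff_eq_zero_of_lt {n k : ℕ} (h : n < k) : jacobiCoeff a b n k = 0 := by
  simp [jacobiCoeff, Nat.choose_eq_zero_of_lt h]

lemma jacobiCoeff_add (m k : ℕ) :
    jacobiCoeff a b (k + m) k =
      (ascPochhammer ℝ m).eval (a + k + 1) / m.factorial *
        ((ascPochhammer ℝ k).eval (k + m + a + b + 1) / k.factorial) := by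
  have hfac : ((k + m).factorial : ℝ) ≠ 0 := by positivity
  rw [jacobiCoeff, Nat.cast_add_choose, Nat.add_sub_cancel_left]
  push_cast
  field_simp

lemma jacobiCoeff_succ_left (n k : ℕ) :
    (n + 1 - k) * (n + a + b + 1) * jacobiCoeff a b (n + 1) k =
      (n + a + 1) * (n + k + a + b + 1) * jacobiCoeff a b n k := by
  rcases lt_trichotomy k (n + 1) with h | rfl | h
  · obtain ⟨m, rfl⟩ := Nat.exists_eq_add_of_le (Nat.le_of_lt_succ h)
    have hshift := ascPochhammer_eval_succ_left k (k + m + a + b + 1)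
    rw [ascPochhammer_succ_eval] at hshift
    rw [add_assoc k m 1, jacobiCoeff_add, jacobiCoeff_add, ascPochhammer_succ_eval,
      Nat.factorial_succ]
    push_cast
    rw [show (k : ℝ) + (m + 1) + a + b + 1 = k + m + a + b + 1 + 1 by ring]
    field_simp
    linear_combination
      (-(a + k + 1 + m) * (m + 1) * (ascPochhammer ℝ m).eval (a + k + 1)) * hshift
  · simp [jacobiCoeff_eq_zero_of_lt]
  · simp [jacobiCoeff_eq_zero_of_lt, h, Nat.lt_of_succ_lt h]

lemma jacobiCoeff_succ_right (n k : ℕ) :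
    (k + 1) * (a + k + 1) * jacobiCoeff a b n (k + 1) =
      (n - k) * (n + k + a + b + 1) * jacobiCoeff a b n k := by
  rcases lt_trichotomy k n with h | rfl | h
  · obtain ⟨m, rfl⟩ := Nat.exists_eq_add_of_le (Nat.succ_le_of_lt h)
    rw [jacobiCoeff_add, add_assoc k 1 m, add_comm 1 m, jacobiCoeff_add, ascPochhammer_succ_eval k,
      ascPochhammer_eval_succ_left m, Nat.factorial_succ, Nat.factorial_succ]
    push_cast
    field_simp
    ring_nf
  · simp [jacobiCoeff_eq_zero_of_lt]
  · simp [jacobiCoeff_eq_zero_of_lt, h, Nat.lt_succ_of_lt h]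

lemma jacobiCoeff_self_succ (n : ℕ) :
    (n + 1) * (n + a + b + 1) * jacobiCoeff a b (n + 1) (n + 1) =
      (2 * n + a + b + 1) * (2 * n + a + b + 2) * jacobiCoeff a b n n := by
  have hself (n : ℕ) :
      jacobiCoeff a b n n = (ascPochhammer ℝ n).eval (n + a + b + 1) / n.factorial := by
    simpa using jacobiCoeff_add a b 0 n
  have hshift := ascPochhammer_eval_succ_left (n + 1) (n + a + b + 1)
  rw [ascPochhammer_succ_eval, ascPochhammer_succ_eval] at hshift
  rw [hself, hself, Nat.factorial_succ]
  push_cast at hshift ⊢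
  rw [show (n : ℝ) + 1 + a + b + 1 = n + a + b + 1 + 1 by ring]
  field_simp
  linear_combination -hshift

lemma jacobiCoeff_succ_zero (n : ℕ) :
    (n + 1) * jacobiCoeff a b (n + 1) 0 = (n + a + 1) * jacobiCoeff a b n 0 := by
  have hzero (n : ℕ) : jacobiCoeff a b n 0 = (ascPochhammer ℝ n).eval (a + 1) / n.factorial := by
    simpa using jacobiCoeff_add a b n 0
  rw [hzero, hzero, ascPochhammer_succ_eval, Nat.factorial_succ]
  push_cast
  field_simp
  ring

lemma jacobiCoeff_recurrence_zero (n : ℕ) :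
    2 * (n + 2) * (n + a + b + 2) * (2 * n + a + b + 2) * jacobiCoeff a b (n + 2) 0 =
      (2 * n + a + b + 3) *
          ((2 * n + a + b + 2) * (2 * n + a + b + 4) + (a ^ 2 - b ^ 2)) *
          jacobiCoeff a b (n + 1) 0 -
        2 * (n + 1 + a) * (n + 1 + b) * (2 * n + a + b + 4) * jacobiCoeff a b n 0 := by
  have hn := jacobiCoeff_succ_zero a b n
  have hn_succ := jacobiCoeff_succ_zero a b (n + 1)
  push_cast at hn_succ
  linear_combination 2 * (n + a + b + 2) * (2 * n + a + b + 2) * hn_succ -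
    2 * (n + 1 + b) * (2 * n + a + b + 4) * hn

lemma succ_mul_jacobiCoeff_succ_succ (n k : ℕ) :
    (k + 1) * jacobiCoeff a b (n + 1) (k + 1) =
      (n + a + b + 2) * jacobiCoeff (a + 1) (b + 1) n k := by
  rcases lt_or_ge n k with h | h
  · simp [jacobiCoeff_eq_zero_of_lt, h]
  obtain ⟨m, rfl⟩ := Nat.exists_eq_add_of_le h
  rw [show k + m + 1 = k + 1 + m by ring, jacobiCoeff_add, jacobiCoeff_add,
    ascPochhammer_eval_succ_left, Nat.factorial_succ]
  push_cast
  field_simp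
  ring_nf

variable {a b}

lemma jacobiCoeff_recurrence_succ (hab : JacobiRegular a b) (n k : ℕ) :
    2 * (n + 2) * (n + a + b + 2) * (2 * n + a + b + 2) * jacobiCoeff a b (n + 2) (k + 1) =
      (2 * n + a + b + 3) *
          (((2 * n + a + b + 2) * (2 * n + a + b + 4) + (a ^ 2 - b ^ 2)) *
              jacobiCoeff a b (n + 1) (k + 1) +
            2 * (2 * n + a + b + 2) * (2 * n + a + b + 4) * jacobiCoeff a b (n + 1) k) -
        2 * (n + 1 + a) * (n + 1 + b) * (2 * n + a + b + 4) * jacobiCoeff a b n (k + 1) := by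
  rcases eq_or_ne k (n + 1) with rfl | hk
  · have hself := jacobiCoeff_self_succ a b (n + 1)
    rw [jacobiCoeff_eq_zero_of_lt a b (by omega : n + 1 < n + 1 + 1),
      jacobiCoeff_eq_zero_of_lt a b (by omega : n < n + 1 + 1)]
    push_cast at hself
    linear_combination 2 * (2 * n + a + b + 2) * hself
  · -- Multiplied by `(n + 1 - k) * (n + k + a + b + 2)`, every term becomes a multiple of
    -- `jacobiCoeff a b (n + 1) (k + 1)`.
    have hk' : (n + 1 - k : ℝ) ≠ 0 := sub_ne_zero.2 (mod_cast hk.symm)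
    have hnk : (n + k + a + b + 2 : ℝ) ≠ 0 := mod_cast hab (n + k)
    have hn := jacobiCoeff_succ_left a b n (k + 1)
    have hn_succ := jacobiCoeff_succ_left a b (n + 1) (k + 1)
    have hk_succ := jacobiCoeff_succ_right a b (n + 1) k
    push_cast at hn hn_succ hk_succ
    refine mul_left_cancel₀ (mul_ne_zero hk' hnk) ?_
    linear_combination 2 * (n + 2) * (2 * n + a + b + 2) * (n + k + a + b + 2) * hn_succ +
      2 * (2 * n + a + b + 2) * (2 * n + a + b + 3) * (2 * n + a + b + 4) * hk_succ -
      2 * (n + 1 + b) * (2 * n + a + b + 4) * (n + 1 - k) * hn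

end Coefficients

section Jacobi

variable (a b : ℝ)

lemma coeff_jacobiTaylorPoly (n k : ℕ) :
    (jacobiTaylorPoly a b n).coeff k = jacobiCoeff a b n k := by
  simp only [jacobiTaylorPoly, finsetSum_coeff, coeff_monomial, sum_ite_eq', mem_range]
  split_ifs with h
  · rfl
  · exact (jacobiCoeff_eq_zero_of_lt a b (by omega)).symm

lemma natDegree_jacobiTaylorPoly_le (n : ℕ) : (jacobiTaylorPoly a b n).natDegree ≤ n :=
  natDegree_le_iff_coeff_eq_zero.2 fun k hk => by
    rw [coeff_jacobiTaylorPoly, jacobiCoeff_eq_zero_of_lt a b hk]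

lemma jacobiTaylorPoly_zero : jacobiTaylorPoly a b 0 = 1 := by
  simp [jacobiTaylorPoly, jacobiCoeff]

lemma derivative_jacobiTaylorPoly_succ (n : ℕ) :
    derivative (jacobiTaylorPoly a b (n + 1)) =
      C (n + a + b + 2) * jacobiTaylorPoly (a + 1) (b + 1) n := by
  ext k
  rw [coeff_derivative, coeff_C_mul, coeff_jacobiTaylorPoly, coeff_jacobiTaylorPoly, mul_comm,
    succ_mul_jacobiCoeff_succ_succ]

variable {a b}

lemma jacobiTaylorPoly_recurrence (hab : JacobiRegular a b) (n : ℕ) :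
    C (2 * (n + 2) * (n + a + b + 2) * (2 * n + a + b + 2)) * jacobiTaylorPoly a b (n + 2) =
      C (2 * n + a + b + 3) *
          (C ((2 * n + a + b + 2) * (2 * n + a + b + 4) + (a ^ 2 - b ^ 2)) *
              jacobiTaylorPoly a b (n + 1) +
            C (2 * (2 * n + a + b + 2) * (2 * n + a + b + 4)) *
              (X * jacobiTaylorPoly a b (n + 1))) -
        C (2 * (n + 1 + a) * (n + 1 + b) * (2 * n + a + b + 4)) * jacobiTaylorPoly a b n := by
  ext k
  cases k with
  | zero =>
    simp only [coeff_sub, coeff_C_mul, coeff_add, coeff_X_mul_zero, coeff_jacobiTaylorPoly]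
    linear_combination jacobiCoeff_recurrence_zero a b n
  | succ k =>
    simp only [coeff_sub, coeff_C_mul, coeff_add, coeff_X_mul, coeff_jacobiTaylorPoly]
    exact jacobiCoeff_recurrence_succ hab n k

lemma eval_jacobiPoly (n : ℕ) (y : ℝ) :
    (jacobiPoly a b n).eval y = (jacobiTaylorPoly a b n).eval ((y - 1) / 2) := by
  simp only [jacobiPoly, eval_comp, eval_mul, eval_C, eval_sub, eval_X, eval_one]
  ring_nf

lemma jacobiP_eq_eval_jacobiPoly (hab : JacobiRegular a b) (n : ℕ) (y : ℝ) :
    jacobiP a b n y = (jacobiPoly a b n).eval y := by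
  rw [eval_jacobiPoly]
  induction n using Nat.twoStepInduction with
  | zero => simp [jacobiP, jacobiTaylorPoly_zero]
  | one =>
    simp only [jacobiP, jacobiTaylorPoly, jacobiCoeff, sum_range_succ, range_zero, sum_empty,
      zero_add, Nat.choose_self, Nat.choose_zero_right, Nat.factorial_one, Nat.cast_zero,
      Nat.cast_one, Nat.sub_zero, Nat.sub_self, ascPochhammer_zero, ascPochhammer_one, eval_add,
      eval_monomial, eval_one, eval_X]
    ring
  | more n ih ih_succ =>
    have hrec := congrArg (eval ((y - 1) / 2)) (jacobiTaylorPoly_recurrence hab n)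
    simp only [eval_sub, eval_add, eval_mul, eval_C, eval_X] at hrec
    have hn : (n + 1 + a + b + 1 : ℝ) ≠ 0 := by convert hab n using 1; ring
    have h2n : (2 * (n + 1) + a + b : ℝ) ≠ 0 := by
      convert hab (2 * n) using 1
      push_cast
      ring
    rw [jacobiP, ih, ih_succ]
    generalize hd : 2 * ((n : ℝ) + 1) + a + b = d at *
    generalize he : (n : ℝ) + 1 + a + b + 1 = e at *
    field_simp
    subst hd he
    linear_combination -hrec

lemma derivative_jacobiPoly_succ (n : ℕ) :
    derivative (jacobiPoly a b (n + 1)) =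
      C ((n + a + b + 2) / 2) * jacobiPoly (a + 1) (b + 1) n := by
  have hlin : derivative (C (1 / 2) * (X - 1) : ℝ[X]) = C (1 / 2) := by simp
  rw [jacobiPoly, derivative_comp, hlin, derivative_jacobiTaylorPoly_succ, C_mul_comp,
    ← jacobiPoly, ← mul_assoc, ← C_mul]
  ring_nf

lemma natDegree_jacobiPoly_le (n : ℕ) : (jacobiPoly a b n).natDegree ≤ n := by
  have hlin : (C (1 / 2) * (X - 1) : ℝ[X]).natDegree ≤ 1 := by compute_degree
  calc (jacobiPoly a b n).natDegree
      ≤ (jacobiTaylorPoly a b n).natDegree * (C (1 / 2) * (X - 1) : ℝ[X]).natDegree :=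
        natDegree_comp_le
    _ ≤ n * 1 := Nat.mul_le_mul (natDegree_jacobiTaylorPoly_le a b n) hlin
    _ = n := mul_one n

lemma jacobiPoly_ne_zero (hab : JacobiRegular a b) (n : ℕ) : jacobiPoly a b n ≠ 0 := by
  induction n generalizing a b with
  | zero => simp [jacobiPoly, jacobiTaylorPoly_zero]
  | succ n ih =>
    intro h
    have hmul : C ((n + a + b + 2) / 2) * jacobiPoly (a + 1) (b + 1) n = 0 := by
      rw [← derivative_jacobiPoly_succ, h, derivative_zero]
    exact mul_ne_zero (C_ne_zero.2 (div_ne_zero (hab n) two_ne_zero)) (ih hab.succ_succ) hmul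

end Jacobi

section Nodal

variable {R ι : Type*} {s : Finset ι}

lemma eq_C_leadingCoeff_mul_nodal [Field R] {v : ι → R} {p : R[X]}
    (hv : Set.InjOn v s) (hp : p.natDegree ≤ #s) (hroot : ∀ i ∈ s, p.eval (v i) = 0) :
    p = C p.leadingCoeff * nodal s v := by
  refine eq_leadingCoeff_mul_of_monic_of_dvd_of_natDegree_le nodal_monic ?_
    (by rwa [natDegree_nodal])
  refine Finset.prod_dvd_of_coprime (fun i hi j hj hij => ?_)
    fun i hi => dvd_iff_isRoot.2 (hroot i hi)
  exact isCoprime_X_sub_C_of_isUnit_sub (sub_ne_zero.2 (hv.ne hi hj hij)).isUnit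

lemma eval_derivative_nodal_ne_zero [CommRing R] [IsDomain R] {v : ι → R}
    (hv : Set.InjOn v s) {i : ι} (hi : i ∈ s) :
    (derivative (nodal s v)).eval (v i) ≠ 0 := by
  classical
  rw [eval_nodal_derivative_eval_node_eq hi]
  refine eval_nodal_not_at_node fun j hj => ?_
  exact hv.ne hi (mem_of_mem_erase hj) (ne_of_mem_erase hj).symm

lemma sub_mul_eval_derivative_nodal_erase [CommRing R] [DecidableEq ι] {v : ι → R} {i j : ι}
    (hi : i ∈ s) (hj : j ∈ s) (hij : i ≠ j) :
    (v i - v j) * (derivative (nodal (s.erase j) v)).eval (v i) =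
      (derivative (nodal s v)).eval (v i) := by
  have hnode : (nodal (s.erase j) v).eval (v i) = 0 :=
    eval_nodal_at_node (mem_erase.2 ⟨hij, hi⟩)
  rw [nodal_eq_mul_nodal_erase hj, derivative_mul]
  simp [hnode]

end Nodal

section GeneralizedLagrange

variable {n : ℕ} {u : ℝ → ℝ} {x : Fin (n + 1) → ℝ} {j k r : Fin (n + 1)}

lemma deriv_prod_comp_sub {ι : Type*} (s : Finset ι) (v : ι → ℝ) {t : ℝ}
    (hu : DifferentiableAt ℝ u t) :
    deriv (fun y => ∏ i ∈ s, (u y - v i)) t = (derivative (nodal s v)).eval (u t) * deriv u t := by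
  simpa only [Function.comp_def, eval_nodal] using
    (((nodal s v).hasDerivAt (u t)).comp t hu.hasDerivAt).deriv

lemma deriv_glL_of_ne (hux : Function.Injective (u ∘ x)) (hj : deriv u (x j) ≠ 0)
    (hk : DifferentiableAt ℝ u (x k)) (hjk : j ≠ k) :
    deriv (glL u x j) (x k) = deriv u (x k) / (u (x k) - u (x j)) *
      ((derivative (nodal univ (u ∘ x))).eval (u (x k)) /
        (derivative (nodal univ (u ∘ x))).eval (u (x j))) := by
  have hw : deriv (glW u x) (x j) =
      (derivative (nodal univ (u ∘ x))).eval (u (x j)) * deriv u (x j) :=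
    deriv_prod_comp_sub univ (u ∘ x) (differentiableAt_of_deriv_ne_zero hj)
  have hnum : deriv (fun t => ∏ i ∈ univ.erase j, (u t - u (x i))) (x k) =
      (derivative (nodal (univ.erase j) (u ∘ x))).eval (u (x k)) * deriv u (x k) :=
    deriv_prod_comp_sub (univ.erase j) (u ∘ x) hk
  have herase : (u (x k) - u (x j)) *
      (derivative (nodal (univ.erase j) (u ∘ x))).eval (u (x k)) =
        (derivative (nodal univ (u ∘ x))).eval (u (x k)) :=
    sub_mul_eval_derivative_nodal_erase (v := u ∘ x) (mem_univ k) (mem_univ j) hjk.symm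
  have hsub : u (x k) - u (x j) ≠ 0 := sub_ne_zero.2 (hux.ne hjk.symm)
  have hnodal : (derivative (nodal univ (u ∘ x))).eval (u (x j)) ≠ 0 :=
    eval_derivative_nodal_ne_zero hux.injOn (mem_univ j)
  unfold glL
  rw [deriv_const_mul_field, hw, hnum, ← herase]
  field_simp

lemma deriv_glL_of_roots {p : ℝ[X]} (hp : p ≠ 0) (hdeg : p.natDegree ≤ n)
    (hux : Function.Injective (u ∘ x)) (hroots : ∀ i, i ≠ r → p.eval (u (x i)) = 0)
    (hj : deriv u (x j) ≠ 0) (hk : DifferentiableAt ℝ u (x k))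
    (hjr : j ≠ r) (hkr : k ≠ r) (hjk : j ≠ k) :
    deriv (glL u x j) (x k) =
      (deriv u (x k) * (u (x k) - u (x r)) /
          ((u (x j) - u (x r)) * (u (x k) - u (x j)))) *
        ((derivative p).eval (u (x k)) / (derivative p).eval (u (x j))) := by
  have hfactor : p = C p.leadingCoeff * nodal (univ.erase r) (u ∘ x) :=
    eq_C_leadingCoeff_mul_nodal hux.injOn (by simpa using hdeg)
      fun i hi => hroots i (ne_of_mem_erase hi)
  have hnodal (i : Fin (n + 1)) (hi : i ≠ r) :
      (u (x i) - u (x r)) * (derivative (nodal (univ.erase r) (u ∘ x))).eval (u (x i)) =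
        (derivative (nodal univ (u ∘ x))).eval (u (x i)) :=
    sub_mul_eval_derivative_nodal_erase (v := u ∘ x) (mem_univ i) (mem_univ r) hi
  have hratio : (derivative p).eval (u (x k)) / (derivative p).eval (u (x j)) =
      (derivative (nodal (univ.erase r) (u ∘ x))).eval (u (x k)) /
        (derivative (nodal (univ.erase r) (u ∘ x))).eval (u (x j)) := by
    have hderiv : derivative p =
        C p.leadingCoeff * derivative (nodal (univ.erase r) (u ∘ x)) := by
      rw [← derivative_C_mul, ← hfactor]
    rw [hderiv, eval_C_mul, eval_C_mul, mul_div_mul_left _ _ (leadingCoeff_ne_zero.2 hp)]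
  rw [deriv_glL_of_ne hux hj hk hjk, hratio, ← hnodal k hkr, ← hnodal j hjr]
  field_simp

end GeneralizedLagrange

theorem gl_jacobi_radau2_interior_general {α β : ℝ} (hαβ : JacobiRegular α β)
    {n : ℕ} {u : ℝ → ℝ} {x : Fin (n + 1) → ℝ} (hux : Function.Injective (u ∘ x))
    {r j k : Fin (n + 1)} (hroots : ∀ i, i ≠ r → jacobiP α β n (u (x i)) = 0)
    (hj : deriv u (x j) ≠ 0) (hk : DifferentiableAt ℝ u (x k))
    (hjr : j ≠ r) (hkr : k ≠ r) (hjk : j ≠ k) :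
    deriv (glL u x j) (x k) =
      (deriv u (x k) * (u (x k) - u (x r)) /
          ((u (x j) - u (x r)) * (u (x k) - u (x j)))) *
        (jacobiP (α + 1) (β + 1) (n - 1) (u (x k)) /
          jacobiP (α + 1) (β + 1) (n - 1) (u (x j))) := by
  cases n with
  | zero => exact absurd (Subsingleton.elim (α := Fin 1) j k) hjk
  | succ n =>
    have hαβ' := hαβ.succ_succ
    rw [deriv_glL_of_roots (jacobiPoly_ne_zero hαβ (n + 1)) (natDegree_jacobiPoly_le (n + 1)) hux
      (fun i hi => by rw [← jacobiP_eq_eval_jacobiPoly hαβ, hroots i hi]) hj hk hjr hkr hjk,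
      derivative_jacobiPoly_succ, eval_C_mul, eval_C_mul,
      mul_div_mul_left _ _ (div_ne_zero (hαβ n) two_ne_zero), Nat.add_sub_cancel,
      jacobiP_eq_eval_jacobiPoly hαβ', jacobiP_eq_eval_jacobiPoly hαβ']

theorem gl_jacobi_radau2_interior (α β : ℝ) (hα : -1 < α) (hβ : -1 < β)
    (n : ℕ) (hn : 1 ≤ n) (u : ℝ → ℝ) (x : Fin (n + 1) → ℝ)
    (hu : Differentiable ℝ u)
    (hu2 : Differentiable ℝ (deriv u))
    (hx : Function.Injective x)
    (hux : Function.Injective (u ∘ x))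
    (hu' : ∀ i, deriv u (x i) ≠ 0)
    (hfirst : u (x 0) = -1)
    (hroots : ∀ i : Fin (n + 1), 0 < (i : ℕ) → jacobiP α (β + 1) n (u (x i)) = 0)
    (j k : Fin (n + 1)) (hj : 1 ≤ (j : ℕ)) (hk : 1 ≤ (k : ℕ)) (hjk : j ≠ k) :
    deriv (glL u x j) (x k) =
      (deriv u (x k) * (u (x k) - u (x 0)) /
          ((u (x j) - u (x 0)) * (u (x k) - u (x j)))) *
        (jacobiP (α + 1) (β + 2) (n - 1) (u (x k)) /
          jacobiP (α + 1) (β + 2) (n - 1) (u (x j))) := by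
  have hreg : JacobiRegular α (β + 1) := JacobiRegular.of_neg_two_lt (by linarith)
  have h := gl_jacobi_radau2_interior_general hreg hux (r := 0)
    (fun i hi => hroots i (Nat.pos_of_ne_zero (Fin.val_ne_zero_iff.2 hi))) (hu' j) (hu (x k))
    (Fin.val_ne_zero_iff.1 (Nat.one_le_iff_ne_zero.1 hj))
    (Fin.val_ne_zero_iff.1 (Nat.one_le_iff_ne_zero.1 hk)) hjk
  rwa [add_assoc β, one_add_one_eq_two] at h
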